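/- For integers a_0, …, a_15, the following three conditions are equivalent: (1) the circulant determinant D(a_0, …, a_15) = ∏_{d | 16} N_d is congruent to 64 modulo 128 (i.e., equals 64 times an odd integer); (2) N_1 and N_2 are each twice an odd integer, and N_4 · N_8 · N_16 is 16 times an odd integer; (3) N_1, N_2 and N_4 are each twice an odd integer, and N_8 · N_16 is 8 times an odd integer. -/

import Mathlib

open Complex Finset

noncomputable def zeta16 : ℂ := Complex.exp (2 * Real.pi * Complex.I / 16)

noncomputable def fpoly (a : Fin 16 → ℤ) (x : ℂ) : ℂ := ∑ k : Fin 16, (a k : ℂ) * x ^ (k : ℕ)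

noncomputable def Nprod (a : Fin 16 → ℤ) (d : ℕ) : ℂ :=
  ∏ l ∈ Finset.filter (fun l => Nat.gcd l 16 = d) (Finset.range 16), fpoly a (zeta16 ^ l)

def circMatrix (a : Fin 16 → ℤ) : Matrix (Fin 16) (Fin 16) ℤ := fun i j => a (i - j)

def S16 : Set ℤ := { n | ∃ a : Fin 16 → ℤ, n = (circMatrix a).det }

def bcoef (a : Fin 16 → ℤ) (k : Fin 16) : ℤ := (a k + a (k + 8)) + (a (k + 4) + a (k + 12))
def ccoef (a : Fin 16 → ℤ) (k : Fin 16) : ℤ := (a k + a (k + 8)) - (a (k + 4) + a (k + 12))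
def ecoef (a : Fin 16 → ℤ) (k : Fin 16) : ℤ := a k - a (k + 8)

/-!
Writing `f(X) = E(X²) + X O(X²)`, the Graeffe transform `G f = E² - X O²` satisfies
`(G f)(x²) = f(x) f(-x)`. Squaring is two-to-one from primitive `2n`-th to primitive `n`-th roots
of unity for even `n`, so the product of `f` over the primitive `2 ^ (k + 1)`-th roots is
`(G^k f)(-1)`. Hence `N₈ = f(-1)`, `N₄ = (G f)(-1)`, `N₂ = (G² f)(-1)`, `N₁ = (G³ f)(-1)`, while
`N₁₆ = f(1)` and `N₈ N₁₆ = (G f)(1)`.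

Frobenius gives `G f ≡ f` mod 2, and `G` turns congruences mod 2 into congruences mod 4, so
`N₁ ≡ N₂ ≡ N₄` mod 4. Moreover `N₄ ≡ N₈ N₁₆` mod 2, and if `4 ∣ N₄ = E(-1)² + O(-1)²` then
`E(±1)` and `O(±1)` are even and `4 ∣ N₈ N₁₆ = E(1)² - O(1)²`. Therefore the valuations of
`N₁`, `N₂`, `N₄` and `N₈ N₁₆` at 2 are all zero, all at least 2 (total at least 8), or
`1, 1, 1, v` with `v ≥ 1`: a total of 6 forces `v = 3`.
-/

open Polynomial Matrix

section Circulant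

variable {R : Type*} [CommRing R] {n : ℕ} [NeZero n] {ζ : R}

theorem vandermonde_mul_circulant (hζ : ζ ^ n = 1) (v : Fin n → R) :
    vandermonde (fun l : Fin n => ζ ^ (l : ℕ)) * circulant v =
      diagonal (fun l : Fin n => ∑ k, v k * (ζ ^ (l : ℕ)) ^ (k : ℕ)) *
        vandermonde (fun l : Fin n => ζ ^ (l : ℕ)) := by
  ext l j
  have hroot : (ζ ^ (l : ℕ)) ^ n = 1 := by rw [pow_right_comm, hζ, one_pow]
  rw [diagonal_mul, mul_apply, ← Equiv.sum_comp (Equiv.addRight j), Finset.sum_mul]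
  refine Finset.sum_congr rfl fun k _ => ?_
  simp only [vandermonde_apply, circulant_apply, Equiv.coe_addRight, add_sub_cancel_right,
    Fin.val_add, ← pow_eq_pow_mod _ hroot, pow_add]
  ring

theorem det_circulant_eq_prod [IsDomain R] (hζ : IsPrimitiveRoot ζ n) (v : Fin n → R) :
    (circulant v).det = ∏ l ∈ range n, ∑ k, v k * (ζ ^ l) ^ (k : ℕ) := by
  have hV : (vandermonde fun l : Fin n => ζ ^ (l : ℕ)).det ≠ 0 :=
    det_vandermonde_ne_zero_iff.mpr fun i j hij => Fin.ext (hζ.pow_inj i.2 j.2 hij)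
  have hdet := congrArg det (vandermonde_mul_circulant hζ.pow_eq_one v)
  rw [det_mul, det_mul, det_diagonal, mul_comm,
    Fin.prod_univ_eq_prod_range fun l => ∑ k, v k * (ζ ^ l) ^ (k : ℕ)] at hdet
  exact mul_right_cancel₀ hV hdet

end Circulant

section PrimitiveRoots

theorem prod_filter_gcd_eq_prod_primitiveRoots {K M : Type*} [CommRing K] [IsDomain K]
    [CommMonoid M] {n d : ℕ} [NeZero n] {ζ : K} (hζ : IsPrimitiveRoot ζ n) (hd : d ∣ n)
    (g : K → M) :
    ∏ l ∈ range n with l.gcd n = d, g (ζ ^ l) = ∏ ω ∈ primitiveRoots (n / d) K, g ω := by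
  have hn : 0 < n := NeZero.pos n
  have hd' : 0 < n / d := Nat.div_pos (Nat.le_of_dvd hn hd) (Nat.pos_of_dvd_of_pos hd hn)
  have hord (l : ℕ) : orderOf (ζ ^ l) = n / l.gcd n := by
    have : IsOfFinOrder ζ := isOfFinOrder_iff_pow_eq_one.mpr ⟨n, hn, hζ.pow_eq_one⟩
    rw [this.orderOf_pow, ← hζ.eq_orderOf, Nat.gcd_comm]
  refine Finset.prod_nbij (ζ ^ ·) ?_ ?_ ?_ fun _ _ => rfl
  · intro l hl
    rw [mem_primitiveRoots hd', IsPrimitiveRoot.iff_orderOf, hord, (mem_filter.mp hl).2]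
  · intro i hi j hj hij
    simp only [coe_filter, Finset.mem_range, Set.mem_ofPred_eq] at hi hj
    exact hζ.pow_inj hi.1 hj.1 hij
  · intro ω hω
    rw [mem_coe, mem_primitiveRoots hd', IsPrimitiveRoot.iff_orderOf] at hω
    have hωn : ω ^ n = 1 := orderOf_dvd_iff_pow_eq_one.mp (hω ▸ Nat.div_dvd_of_dvd hd)
    obtain ⟨l, hl, rfl⟩ := hζ.eq_pow_of_pow_eq_one hωn
    rw [hord] at hω
    have hgcd : l.gcd n = d :=
      (Nat.div_eq_iff_eq_of_dvd_dvd hn.ne' (Nat.gcd_dvd_right l n) hd).mp hω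
    exact ⟨l, by simp [hl, hgcd], rfl⟩

theorem isPrimitiveRoot_sq_iff {M : Type*} [CommMonoid M] {x : M} {n : ℕ} (hn : Even n) :
    IsPrimitiveRoot (x ^ 2) n ↔ IsPrimitiveRoot x (2 * n) := by
  rw [IsPrimitiveRoot.iff_orderOf, IsPrimitiveRoot.iff_orderOf, orderOf_pow' x two_ne_zero]
  rcases Nat.even_or_odd (orderOf x) with hx | hx
  · rw [Nat.gcd_eq_right hx.two_dvd]
    have := hx.two_dvd
    lia
  · rw [Nat.Coprime.gcd_eq_one hx.coprime_two_right]
    obtain ⟨r, hr⟩ := hn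
    obtain ⟨s, hs⟩ := hx
    lia

end PrimitiveRoots

section Graeffe

variable {R : Type*} [CommRing R]

/-- The polynomial `E` in the decomposition `f(X) = E(X²) + X O(X²)`. -/
noncomputable def evenPart (f : R[X]) : R[X] := contract 2 f

/-- The polynomial `O` in the decomposition `f(X) = E(X²) + X O(X²)`. -/
noncomputable def oddPart (f : R[X]) : R[X] := contract 2 f.divX

/-- The Graeffe transform of `f`, characterised by `(graeffe f)(X²) = f(X) f(-X)`. -/
noncomputable def graeffe (f : R[X]) : R[X] := evenPart f ^ 2 - X * oddPart f ^ 2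

theorem evenPart_add (f g : R[X]) : evenPart (f + g) = evenPart f + evenPart g :=
  contract_add two_ne_zero f g

theorem oddPart_add (f g : R[X]) : oddPart (f + g) = oddPart f + oddPart g := by
  rw [oddPart, divX_add, contract_add two_ne_zero, oddPart, oddPart]

theorem expand_evenPart_add_X_mul_expand_oddPart (f : R[X]) :
    expand R 2 (evenPart f) + X * expand R 2 (oddPart f) = f := by
  ext n
  rcases Nat.even_or_odd' n with ⟨k, rfl | rfl⟩
  · have hodd : (X * expand R 2 (oddPart f)).coeff (2 * k) = 0 := by
      rcases k with _ | k
      · simp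
      · rw [mul_add_one, coeff_X_mul, coeff_expand two_pos, if_neg (by lia)]
    rw [coeff_add, hodd, add_zero, coeff_expand_mul' two_pos, evenPart, coeff_contract two_ne_zero,
      mul_comm]
  · rw [coeff_add, coeff_X_mul, coeff_expand_mul' two_pos, oddPart, coeff_contract two_ne_zero,
      coeff_divX, coeff_expand two_pos, if_neg (by lia), zero_add, mul_comm]

theorem aeval_eq_aeval_evenPart_add_oddPart {A : Type*} [CommRing A] [Algebra R A] (f : R[X])
    (x : A) : aeval x f = aeval (x ^ 2) (evenPart f) + x * aeval (x ^ 2) (oddPart f) := by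
  conv_lhs => rw [← expand_evenPart_add_X_mul_expand_oddPart f]
  simp only [map_add, map_mul, expand_aeval, aeval_X]

theorem aeval_sq_graeffe {A : Type*} [CommRing A] [Algebra R A] (f : R[X]) (x : A) :
    aeval (x ^ 2) (graeffe f) = aeval x f * aeval (-x) f := by
  rw [aeval_eq_aeval_evenPart_add_oddPart f x, aeval_eq_aeval_evenPart_add_oddPart f (-x),
    neg_sq, graeffe]
  simp only [map_sub, map_mul, map_pow, aeval_X]
  ring

theorem prod_primitiveRoots_two_mul_aeval {K : Type*} [Field K] [IsAlgClosed K] [Algebra R K]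
    (hK : ringChar K ≠ 2) {n : ℕ} [NeZero n] (hn : Even n) (f : R[X]) :
    ∏ ω ∈ primitiveRoots (2 * n) K, aeval ω f = ∏ η ∈ primitiveRoots n K, aeval η (graeffe f) := by
  classical
  have hmem (ω : K) : ω ∈ primitiveRoots (2 * n) K ↔ ω ^ 2 ∈ primitiveRoots n K := by
    rw [mem_primitiveRoots (NeZero.pos _), mem_primitiveRoots (NeZero.pos _),
      isPrimitiveRoot_sq_iff hn]
  rw [← Finset.prod_fiberwise_of_maps_to fun ω => (hmem ω).mp]
  refine Finset.prod_congr rfl fun η hη => ?_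
  obtain ⟨ω, rfl⟩ := IsAlgClosed.exists_pow_nat_eq η two_pos
  have hω : ω ≠ 0 := by
    rintro rfl
    exact (isPrimitiveRoot_of_mem_primitiveRoots hη).ne_zero (NeZero.ne n) (zero_pow two_ne_zero)
  have hfiber : {x ∈ primitiveRoots (2 * n) K | x ^ 2 = ω ^ 2} = {ω, -ω} := by
    ext x
    simp only [mem_filter, mem_insert, mem_singleton, sq_eq_sq_iff_eq_or_eq_neg, hmem]
    refine and_iff_right_of_imp ?_
    rintro (rfl | rfl)
    · exact hη
    · rwa [neg_sq]
  rw [hfiber, prod_pair (Ne.symm <| (Ring.eq_self_iff_eq_zero_of_char_ne_two hK).not.mpr hω),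
    aeval_sq_graeffe]

theorem primitiveRoots_two {K : Type*} [CommRing K] [IsDomain K] (hK : ringChar K ≠ 2) :
    primitiveRoots 2 K = {-1} := by
  ext x
  rw [mem_primitiveRoots two_pos, mem_singleton]
  refine ⟨IsPrimitiveRoot.eq_neg_one_of_two_right, ?_⟩
  rintro rfl
  exact IsPrimitiveRoot.neg_one (ringChar K) hK

theorem prod_primitiveRoots_two_pow_aeval {K : Type*} [Field K] [IsAlgClosed K] [Algebra R K]
    (hK : ringChar K ≠ 2) (k : ℕ) (f : R[X]) :
    ∏ ω ∈ primitiveRoots (2 ^ (k + 1)) K, aeval ω f =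
      algebraMap R K ((graeffe^[k] f).eval (-1)) := by
  induction k generalizing f with
  | zero =>
    rw [zero_add, pow_one, primitiveRoots_two hK, prod_singleton, Function.iterate_zero, id,
      ← aeval_algebraMap_apply_eq_algebraMap_eval, map_neg, map_one]
  | succ k ih =>
    rw [pow_succ', prod_primitiveRoots_two_mul_aeval hK (even_two.pow_of_ne_zero k.succ_ne_zero),
      ih, Function.iterate_succ_apply]

theorem eval_one_graeffe (f : R[X]) : (graeffe f).eval 1 = f.eval 1 * f.eval (-1) := by
  simpa using aeval_sq_graeffe f (1 : R)

end Graeffe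

section Congruences

theorem four_dvd_graeffe_sub_graeffe {R : Type*} [CommRing R] {f g : R[X]} (h : 2 ∣ f - g) :
    4 ∣ graeffe f - graeffe g := by
  obtain ⟨u, hu⟩ := h
  obtain rfl : f = g + (u + u) := by linear_combination hu
  simp only [graeffe, evenPart_add, oddPart_add]
  exact ⟨evenPart g * evenPart u + evenPart u ^ 2 -
    X * (oddPart g * oddPart u + oddPart u ^ 2), by ring⟩

theorem prime_dvd_pow_sub_expand (p : ℕ) [Fact p.Prime] (f : ℤ[X]) :
    (p : ℤ[X]) ∣ f ^ p - expand ℤ p f := by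
  have hmap : (f ^ p - expand ℤ p f).map (Int.castRingHom (ZMod p)) = 0 := by
    rw [Polynomial.map_sub, Polynomial.map_pow, map_expand, ZMod.expand_card, sub_self]
  rw [← C_eq_natCast, C_dvd_iff_dvd_coeff]
  intro i
  rw [← CharP.intCast_eq_zero_iff (ZMod p) p, ← eq_intCast (Int.castRingHom (ZMod p)),
    ← coeff_map, hmap, coeff_zero]

theorem two_dvd_graeffe_sub_self (f : ℤ[X]) : 2 ∣ graeffe f - f := by
  obtain ⟨u, hu⟩ := prime_dvd_pow_sub_expand 2 (evenPart f)
  obtain ⟨v, hv⟩ := prime_dvd_pow_sub_expand 2 (oddPart f)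
  refine ⟨u + X * v - X * oddPart f ^ 2, ?_⟩
  rw [graeffe]
  push_cast at hu hv
  linear_combination hu + X * hv + expand_evenPart_add_X_mul_expand_oddPart f

theorem eval_iterate_graeffe_modEq_four (f : ℤ[X]) (x : ℤ) (k : ℕ) :
    (graeffe^[k + 1] f).eval x ≡ (graeffe f).eval x [ZMOD 4] := by
  induction k with
  | zero => rfl
  | succ k ih =>
    have h := eval_dvd (x := x) (four_dvd_graeffe_sub_graeffe (two_dvd_graeffe_sub_self
      (graeffe^[k] f)))
    rw [eval_sub, ← Function.iterate_succ_apply' graeffe, ← Function.iterate_succ_apply' graeffe,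
      eval_ofNat] at h
    exact (Int.modEq_iff_dvd.mpr h).symm.trans ih

theorem four_dvd_sq_add_sq_iff {a b : ℤ} : 4 ∣ a ^ 2 + b ^ 2 ↔ 2 ∣ a ∧ 2 ∣ b := by
  have hsq (c : ℤ) : c ^ 2 % 4 = if 2 ∣ c then 0 else 1 := by
    split_ifs with hc
    · exact Int.emod_eq_zero_of_dvd (pow_dvd_pow_of_dvd hc 2)
    · exact Int.sq_mod_four_eq_one_of_odd
        (Int.not_even_iff_odd.mp (even_iff_two_dvd.not.mpr hc))
  have ha := hsq a
  have hb := hsq b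
  grind

theorem eval_neg_one_modEq_two (f : ℤ[X]) : f.eval (-1) ≡ f.eval 1 [ZMOD 2] :=
  Int.modEq_iff_dvd.mpr (sub_dvd_eval_sub 1 (-1) f)

theorem four_dvd_eval_one_graeffe {f : ℤ[X]} (h : 4 ∣ (graeffe f).eval (-1)) :
    4 ∣ (graeffe f).eval 1 := by
  have hnorm : (graeffe f).eval (-1) =
      (evenPart f).eval (-1) ^ 2 + (oddPart f).eval (-1) ^ 2 := by
    simp [graeffe]
  have hdiff : (graeffe f).eval 1 = (evenPart f).eval 1 ^ 2 - (oddPart f).eval 1 ^ 2 := by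
    simp [graeffe]
  rw [hnorm, four_dvd_sq_add_sq_iff, (eval_neg_one_modEq_two _).dvd_iff,
    (eval_neg_one_modEq_two _).dvd_iff] at h
  rw [hdiff]
  exact dvd_sub (pow_dvd_pow_of_dvd h.1 2) (pow_dvd_pow_of_dvd h.2 2)

end Congruences

section TwoAdic

theorem exists_odd_eq_two_pow_mul_iff {n : ℤ} {k : ℕ} :
    (∃ m : ℤ, Odd m ∧ n = 2 ^ k * m) ↔ emultiplicity 2 n = k := by
  rw [emultiplicity_eq_coe]
  constructor
  · rintro ⟨m, hm, rfl⟩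
    refine ⟨dvd_mul_right _ _, fun h => ?_⟩
    rw [pow_succ, mul_dvd_mul_iff_left (by positivity)] at h
    exact Int.not_even_iff_odd.mpr hm (even_iff_two_dvd.mpr h)
  · rintro ⟨⟨m, rfl⟩, h⟩
    refine ⟨m, ?_, rfl⟩
    rw [← Int.not_even_iff_odd, even_iff_two_dvd]
    exact fun hm => h (pow_succ (2 : ℤ) k ▸ mul_dvd_mul_left _ hm)

theorem tfae_add_eq_six {i j k l : ℕ∞} (hik : 1 ≤ i ↔ 1 ≤ k) (hik' : 2 ≤ i ↔ 2 ≤ k)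
    (hjk : 1 ≤ j ↔ 1 ≤ k) (hjk' : 2 ≤ j ↔ 2 ≤ k) (hkl : 1 ≤ k ↔ 1 ≤ l) (hkl' : 2 ≤ k → 2 ≤ l) :
    List.TFAE [i + j + (k + l) = 6, i = 1 ∧ j = 1 ∧ k + l = 4, i = 1 ∧ j = 1 ∧ k = 1 ∧ l = 3] := by
  tfae_have 1 → 3 := by
    intro h
    lift i to ℕ using by rintro rfl; simp at h
    lift j to ℕ using by rintro rfl; simp at h
    lift k to ℕ using by rintro rfl; simp at h
    lift l to ℕ using by rintro rfl; simp at h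
    norm_cast at *
    lia
  tfae_have 3 → 2 := by
    rintro ⟨rfl, rfl, rfl, rfl⟩
    norm_num
  tfae_have 2 → 1 := by
    rintro ⟨rfl, rfl, h⟩
    rw [h]
    norm_num
  tfae_finish

theorem tfae_mul_eq_sixty_four_mul_odd {x y z w : ℤ} (hxz : x ≡ z [ZMOD 4]) (hyz : y ≡ z [ZMOD 4])
    (hzw : z ≡ w [ZMOD 2]) (hzw' : 4 ∣ z → 4 ∣ w) :
    List.TFAE
      [ ∃ m : ℤ, Odd m ∧ x * y * (z * w) = 64 * m,
        (∃ m : ℤ, Odd m ∧ x = 2 * m) ∧ (∃ m : ℤ, Odd m ∧ y = 2 * m) ∧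
          (∃ m : ℤ, Odd m ∧ z * w = 16 * m),
        (∃ m : ℤ, Odd m ∧ x = 2 * m) ∧ (∃ m : ℤ, Odd m ∧ y = 2 * m) ∧
          (∃ m : ℤ, Odd m ∧ z = 2 * m) ∧ (∃ m : ℤ, Odd m ∧ w = 8 * m) ] := by
  have two_dvd_iff (n : ℤ) : 2 ∣ n ↔ 1 ≤ emultiplicity 2 n := by
    simpa using pow_dvd_iff_le_emultiplicity (a := 2) (b := n) (k := 1)
  have four_dvd_iff (n : ℤ) : 4 ∣ n ↔ 2 ≤ emultiplicity 2 n := by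
    simpa using pow_dvd_iff_le_emultiplicity (a := 2) (b := n) (k := 2)
  have eq_two_mul_iff (n : ℤ) : (∃ m : ℤ, Odd m ∧ n = 2 * m) ↔ emultiplicity 2 n = 1 :=
    exists_odd_eq_two_pow_mul_iff (k := 1)
  have eq_eight_mul_iff (n : ℤ) : (∃ m : ℤ, Odd m ∧ n = 8 * m) ↔ emultiplicity 2 n = 3 :=
    exists_odd_eq_two_pow_mul_iff (k := 3)
  have eq_sixteen_mul_iff (n : ℤ) : (∃ m : ℤ, Odd m ∧ n = 16 * m) ↔ emultiplicity 2 n = 4 :=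
    exists_odd_eq_two_pow_mul_iff (k := 4)
  have eq_sixty_four_mul_iff (n : ℤ) : (∃ m : ℤ, Odd m ∧ n = 64 * m) ↔ emultiplicity 2 n = 6 :=
    exists_odd_eq_two_pow_mul_iff (k := 6)
  simp only [eq_two_mul_iff, eq_eight_mul_iff, eq_sixteen_mul_iff, eq_sixty_four_mul_iff,
    emultiplicity_mul Int.prime_two]
  have h24 : (2 : ℤ) ∣ 4 := by norm_num
  apply tfae_add_eq_six <;> simp only [← two_dvd_iff, ← four_dvd_iff]
  exacts [(hxz.of_dvd h24).dvd_iff, hxz.dvd_iff, (hyz.of_dvd h24).dvd_iff, hyz.dvd_iff,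
    hzw.dvd_iff, hzw']

end TwoAdic

theorem isPrimitiveRoot_zeta16 : IsPrimitiveRoot zeta16 16 :=
  Complex.isPrimitiveRoot_exp 16 (by norm_num)

theorem fpoly_eq_aeval_ofFn (a : Fin 16 → ℤ) (x : ℂ) : fpoly a x = aeval x (ofFn 16 a) := by
  simp only [fpoly, ofFn_eq_sum_monomial, map_sum, aeval_monomial, eq_intCast]

theorem Nprod_eq_prod_primitiveRoots (a : Fin 16 → ℤ) {d : ℕ} (hd : d ∣ 16) :
    Nprod a d = ∏ ω ∈ primitiveRoots (16 / d) ℂ, aeval ω (ofFn 16 a) := by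
  simp only [Nprod, fpoly_eq_aeval_ofFn]
  exact prod_filter_gcd_eq_prod_primitiveRoots isPrimitiveRoot_zeta16 hd fun ω => aeval ω _

theorem Nprod_sixteen (a : Fin 16 → ℤ) : Nprod a 16 = ((ofFn 16 a).eval 1 : ℤ) := by
  rw [Nprod_eq_prod_primitiveRoots a dvd_rfl, Nat.div_self (by norm_num),
    IsPrimitiveRoot.primitiveRoots_one, prod_singleton, ← eq_intCast (algebraMap ℤ ℂ),
    ← aeval_algebraMap_apply_eq_algebraMap_eval, map_one]

theorem Nprod_eq_eval_iterate_graeffe (a : Fin 16 → ℤ) {d k : ℕ} (hd : 16 = 2 ^ (k + 1) * d) :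
    Nprod a d = ((graeffe^[k] (ofFn 16 a)).eval (-1) : ℤ) := by
  have hquot : 16 / d = 2 ^ (k + 1) := Nat.div_eq_of_eq_mul_left (by lia) hd
  rw [Nprod_eq_prod_primitiveRoots a ⟨_, hd.trans (mul_comm _ _)⟩, hquot,
    prod_primitiveRoots_two_pow_aeval (by simp [ringChar.eq_zero]), eq_intCast]

theorem det_circMatrix_eq_prod_Nprod (a : Fin 16 → ℤ) :
    ((circMatrix a).det : ℂ) = ∏ d ∈ Nat.divisors 16, Nprod a d := by
  have hgcd (l : ℕ) (_ : l ∈ range 16) : l.gcd 16 ∈ Nat.divisors 16 :=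
    Nat.mem_divisors.mpr ⟨Nat.gcd_dvd_right l 16, by norm_num⟩
  have hcast : (circMatrix a).map (Int.cast : ℤ → ℂ) = circulant fun k => (a k : ℂ) := rfl
  rw [Int.cast_det, hcast, det_circulant_eq_prod isPrimitiveRoot_zeta16]
  exact (Finset.prod_fiberwise_of_maps_to hgcd fun l => fpoly a (zeta16 ^ l)).symm

theorem det_circMatrix_eq_eval_graeffe (a : Fin 16 → ℤ) :
    (circMatrix a).det = (graeffe^[3] (ofFn 16 a)).eval (-1) * (graeffe^[2] (ofFn 16 a)).eval (-1) *
      ((graeffe (ofFn 16 a)).eval (-1) * (graeffe (ofFn 16 a)).eval 1) := by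
  have hdiv : Nat.divisors 16 = {1, 2, 4, 8, 16} := by decide
  apply Int.cast_injective (α := ℂ)
  rw [det_circMatrix_eq_prod_Nprod, hdiv, prod_insert (by decide), prod_insert (by decide),
    prod_insert (by decide), prod_insert (by decide), prod_singleton,
    Nprod_eq_eval_iterate_graeffe a (k := 3) rfl, Nprod_eq_eval_iterate_graeffe a (k := 2) rfl,
    Nprod_eq_eval_iterate_graeffe a (k := 1) rfl, Nprod_eq_eval_iterate_graeffe a (k := 0) rfl,
    Nprod_sixteen, eval_one_graeffe]
  push_cast [Function.iterate_zero, Function.iterate_one, id]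
  ring

theorem det_64_odd_tfae (a : Fin 16 → ℤ)
    (N1 N2 N4 N8 N16 : ℤ)
    (h1 : (N1 : ℂ) = Nprod a 1) (h2 : (N2 : ℂ) = Nprod a 2) (h4 : (N4 : ℂ) = Nprod a 4)
    (h8 : (N8 : ℂ) = Nprod a 8) (h16 : (N16 : ℂ) = Nprod a 16) :
    List.TFAE
      [ ∃ m : ℤ, Odd m ∧ (circMatrix a).det = 64 * m,
        (∃ m : ℤ, Odd m ∧ N1 = 2 * m) ∧ (∃ m : ℤ, Odd m ∧ N2 = 2 * m) ∧
          (∃ m : ℤ, Odd m ∧ N4 * N8 * N16 = 16 * m),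
        (∃ m : ℤ, Odd m ∧ N1 = 2 * m) ∧ (∃ m : ℤ, Odd m ∧ N2 = 2 * m) ∧
          (∃ m : ℤ, Odd m ∧ N4 = 2 * m) ∧ (∃ m : ℤ, Odd m ∧ N8 * N16 = 8 * m) ] := by
  set f := ofFn 16 a
  obtain rfl : N1 = (graeffe^[3] f).eval (-1) :=
    Int.cast_injective (h1.trans (Nprod_eq_eval_iterate_graeffe a rfl))
  obtain rfl : N2 = (graeffe^[2] f).eval (-1) :=
    Int.cast_injective (h2.trans (Nprod_eq_eval_iterate_graeffe a rfl))
  obtain rfl : N4 = (graeffe f).eval (-1) :=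
    Int.cast_injective (h4.trans (Nprod_eq_eval_iterate_graeffe a (k := 1) rfl))
  obtain rfl : N8 = f.eval (-1) :=
    Int.cast_injective (h8.trans (Nprod_eq_eval_iterate_graeffe a (k := 0) rfl))
  obtain rfl : N16 = f.eval 1 := Int.cast_injective (h16.trans (Nprod_sixteen a))
  rw [det_circMatrix_eq_eval_graeffe, mul_assoc ((graeffe f).eval (-1)), mul_comm (f.eval (-1)),
    ← eval_one_graeffe]
  exact tfae_mul_eq_sixty_four_mul_odd (eval_iterate_graeffe_modEq_four f (-1) 2)
    (eval_iterate_graeffe_modEq_four f (-1) 1) (eval_neg_one_modEq_two (graeffe f))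
    four_dvd_eval_one_graeffe
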